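/- arXiv:2505.14440 — 12 statements merged into one kernel-verified Lean document; each statement's English description precedes it below -/
import Mathlib

section
/- Let F be a real f×n matrix and for y ∈ ℝ^f put P(y) := {x ∈ ℝ^n : F x ≤ y componentwise}. Suppose U ⊆ ℝ^m is convex, W ⊆ ℝ^n is nonempty, d ∈ ℝ^f satisfies F w ≤ d componentwise for every w ∈ W, and Δ is the convex hull of the matrix pairs (A_1,B_1),…,(A_r,B_r). Suppose y, y⁺ ∈ ℝ^f are such that P(y) equals the convex hull of the points V_1 y, …, V_v y, and there exist u_1,…,u_v ∈ U with F(A_i (V_j y) + B_i u_j) + d ≤ y⁺ for all i ∈ {1,…,r} and j ∈ {1,…,v}. Then for every x ∈ P(y) there exists u ∈ U such that A x + B u + w ∈ P(y⁺) for every (A,B) ∈ Δ and every w ∈ W. -/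
open Matrix

/-- If `P(y)` is the convex hull of the vertex points `V j *ᵥ y` and there exist
vertex inputs `u j ∈ U` satisfying the one-step configuration-constrained inequalities, then for
every state `x ∈ P(y)` there is an input `u ∈ U` steering the uncertain system into `P(y⁺)`
for every matrix pair in `Δ` and every disturbance in `W`. -/
theorem statement0
    {f n m r v : ℕ}
    (F : Matrix (Fin f) (Fin n) ℝ)
    (V : Fin v → Matrix (Fin n) (Fin f) ℝ)
    (A : Fin r → Matrix (Fin n) (Fin n) ℝ)
    (B : Fin r → Matrix (Fin n) (Fin m) ℝ)
    (U : Set (Fin m → ℝ)) (hU : Convex ℝ U)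
    (W : Set (Fin n → ℝ)) (hW : W.Nonempty)
    (d : Fin f → ℝ) (hd : ∀ w ∈ W, F *ᵥ w ≤ d)
    (y yplus : Fin f → ℝ)
    (hP : {x : Fin n → ℝ | F *ᵥ x ≤ y} =
      convexHull ℝ (Set.range fun j : Fin v => (V j) *ᵥ y))
    (u : Fin v → Fin m → ℝ) (hu : ∀ j, u j ∈ U)
    (hinv : ∀ (i : Fin r) (j : Fin v),
      F *ᵥ (A i *ᵥ ((V j) *ᵥ y) + B i *ᵥ u j) + d ≤ yplus) :
    ∀ x : Fin n → ℝ, F *ᵥ x ≤ y →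
      ∃ u' ∈ U, ∀ AB ∈ convexHull ℝ (Set.range fun i : Fin r => (A i, B i)),
        ∀ w ∈ W, F *ᵥ (AB.1 *ᵥ x + AB.2 *ᵥ u' + w) ≤ yplus := by
  have comb : ∀ (p q c : Fin f → ℝ) (a b : ℝ), 0 ≤ a → 0 ≤ b → a + b = 1 →
      p + d ≤ c → q + d ≤ c → a • p + b • q + d ≤ c := by
    intro p q c a b ha hb hab hp hq k
    have h1 := mul_le_mul_of_nonneg_left (hp k) ha
    have h2 := mul_le_mul_of_nonneg_left (hq k) hb
    have hb' : b = 1 - a := by linarith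
    subst hb'
    simp only [Pi.add_apply, Pi.smul_apply, smul_eq_mul] at *
    linarith
  intro x hx
  have hS : convexHull ℝ (Set.range fun j : Fin v => (V j) *ᵥ y) ⊆
      {x | ∃ u' ∈ U, ∀ i, F *ᵥ (A i *ᵥ x + B i *ᵥ u') + d ≤ yplus} := by
    apply convexHull_min
    · rintro _ ⟨j, rfl⟩
      exact ⟨u j, hu j, fun i => hinv i j⟩
    · rintro x₁ ⟨u₁, hu₁, h₁⟩ x₂ ⟨u₂, hu₂, h₂⟩ a b ha hb hab
      refine ⟨a • u₁ + b • u₂, hU hu₁ hu₂ ha hb hab, fun i => ?_⟩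
      have h := comb _ _ _ a b ha hb hab (h₁ i) (h₂ i)
      convert h using 2
      simp only [mulVec_add, mulVec_smul, smul_add]
      abel
  have hx' : x ∈ convexHull ℝ (Set.range fun j : Fin v => (V j) *ᵥ y) := by
    rw [← hP]; exact hx
  obtain ⟨u', hu', h'⟩ := hS hx'
  refine ⟨u', hu', fun AB hAB w hw => ?_⟩
  have hT : convexHull ℝ (Set.range fun i : Fin r => (A i, B i)) ⊆
      {AB | F *ᵥ (AB.1 *ᵥ x + AB.2 *ᵥ u') + d ≤ yplus} := by
    apply convexHull_min
    · rintro _ ⟨i, rfl⟩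
      exact h' i
    · intro p hp q hq a b ha hb hab
      have h := comb _ _ _ a b ha hb hab hp hq
      simp only [Set.mem_setOf_eq]
      convert h using 2
      simp only [Prod.fst_add, Prod.snd_add, Prod.smul_fst, Prod.smul_snd, add_mulVec,
        smul_mulVec, mulVec_add, mulVec_smul, smul_add]
      abel
  have h3 : F *ᵥ (AB.1 *ᵥ x + AB.2 *ᵥ u') + d ≤ yplus := hT hAB
  rw [mulVec_add]
  exact (add_le_add_right (hd w hw) _).trans h3
end

section
/- Let F be a real f×n matrix, P(y) := {x ∈ ℝ^n : F x ≤ y componentwise}, W ⊆ ℝ^n a nonempty compact set, and d ∈ ℝ^f with d_k = sup{(F w)_k : w ∈ W} for every row index k. Let Δ be the convex hull of matrix pairs (A_1,B_1),…,(A_r,B_r). Suppose y, y⁺ ∈ ℝ^f satisfy: V_j y ∈ P(y) for every j ∈ {1,…,v}, and for every x ∈ P(y) there exists u ∈ U with A x + B u + w ∈ P(y⁺) for all (A,B) ∈ Δ and all w ∈ W. Then there exist u_1,…,u_v ∈ U such that F(A_i (V_j y) + B_i u_j) + d ≤ y⁺ for all i ∈ {1,…,r} and j ∈ {1,…,v}.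 -/
open Matrix

/-- Converse direction. If all vertex points `V j *ᵥ y` lie in `P(y)` and for every
`x ∈ P(y)` there is an admissible input robustly steering the system into `P(y⁺)`, then there
exist vertex inputs `u_1,…,u_v ∈ U` certifying the configuration-constrained inequalities with
the rowwise support vector `d` of the compact disturbance set `W`. -/
theorem statement1
    {f n m r v : ℕ}
    (F : Matrix (Fin f) (Fin n) ℝ)
    (V : Fin v → Matrix (Fin n) (Fin f) ℝ)
    (A : Fin r → Matrix (Fin n) (Fin n) ℝ)
    (B : Fin r → Matrix (Fin n) (Fin m) ℝ)
    (U : Set (Fin m → ℝ))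
    (W : Set (Fin n → ℝ)) (hWne : W.Nonempty) (hWcpt : IsCompact W)
    (d : Fin f → ℝ) (hd : ∀ k : Fin f, d k = sSup ((fun w => (F *ᵥ w) k) '' W))
    (y yplus : Fin f → ℝ)
    (hver : ∀ j : Fin v, F *ᵥ ((V j) *ᵥ y) ≤ y)
    (hfeas : ∀ x : Fin n → ℝ, F *ᵥ x ≤ y →
      ∃ u ∈ U, ∀ AB ∈ convexHull ℝ (Set.range fun i : Fin r => (A i, B i)),
        ∀ w ∈ W, F *ᵥ (AB.1 *ᵥ x + AB.2 *ᵥ u + w) ≤ yplus) :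
    ∃ u : Fin v → Fin m → ℝ, (∀ j, u j ∈ U) ∧
      ∀ (i : Fin r) (j : Fin v),
        F *ᵥ (A i *ᵥ ((V j) *ᵥ y) + B i *ᵥ u j) + d ≤ yplus := by
  choose u hu h using fun j => hfeas _ (hver j)
  refine ⟨u, hu, fun i j k => ?_⟩
  have key : d k ≤ yplus k - (F *ᵥ (A i *ᵥ ((V j) *ᵥ y) + B i *ᵥ u j)) k := by
    rw [hd k]
    refine csSup_le (hWne.image _) ?_
    rintro _ ⟨w, hw, rfl⟩
    have h1 := h j (A i, B i) (subset_convexHull ℝ _ ⟨i, rfl⟩) w hw k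
    rw [Matrix.mulVec_add, Pi.add_apply] at h1
    dsimp only at h1 ⊢
    linarith
  rw [Pi.add_apply]
  linarith
end

section
/- Let y_0, y_1, y_2, … be a sequence in the configuration cone 𝓔 = {y ∈ ℝ^f : E y ≤ 0}, and assume that for every y ∈ 𝓔 the polytope P(y) equals the convex hull of V_1 y, …, V_v y and V_j y ∈ P(y) for every j. Assume X ⊆ ℝ^n and U ⊆ ℝ^m are convex, W is nonempty and compact, and d_k = sup{(F w)_k : w ∈ W}. Then the sequence of sets P(y_0), P(y_1), … is a feasible robust control tube (i.e., P(y_k) ⊆ X and P(y_{k+1}) ∈ F_reach(P(y_k)) for all k) if and only if there exists a sequence of input tuples u_k = (u_{k,1},…,u_{k,v}) ∈ (ℝ^m)^v such that (y_k, u_k, y_{k+1}) ∈ S for all k ∈ ℕ. -/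
open Matrix

/-- Proposition 1: a sequence of configuration-constrained polytopes `P(y_k)` with
`y_k ∈ 𝓔` is a feasible robust control tube if and only if there exists a sequence of vertex
input tuples `u_k` with `(y_k, u_k, y_{k+1}) ∈ 𝕊` for all `k`. -/
theorem statement2
    {f n m r v e : ℕ}
    (F : Matrix (Fin f) (Fin n) ℝ)
    (E : Matrix (Fin e) (Fin f) ℝ)
    (V : Fin v → Matrix (Fin n) (Fin f) ℝ)
    (A : Fin r → Matrix (Fin n) (Fin n) ℝ)
    (B : Fin r → Matrix (Fin n) (Fin m) ℝ)
    (X : Set (Fin n → ℝ)) (hX : Convex ℝ X)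
    (U : Set (Fin m → ℝ)) (hU : Convex ℝ U)
    (W : Set (Fin n → ℝ)) (hWne : W.Nonempty) (hWcpt : IsCompact W)
    (d : Fin f → ℝ) (hd : ∀ k : Fin f, d k = sSup ((fun w => (F *ᵥ w) k) '' W))
    (hconv : ∀ y' : Fin f → ℝ, E *ᵥ y' ≤ 0 →
      {x : Fin n → ℝ | F *ᵥ x ≤ y'} =
        convexHull ℝ (Set.range fun j : Fin v => (V j) *ᵥ y'))
    (hver : ∀ (y' : Fin f → ℝ), E *ᵥ y' ≤ 0 → ∀ j : Fin v, F *ᵥ ((V j) *ᵥ y') ≤ y')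
    (y : ℕ → Fin f → ℝ) (hy : ∀ k, E *ᵥ (y k) ≤ 0) :
    -- the sequence P(y_0), P(y_1), … is a feasible robust control tube
    (∀ k : ℕ,
        {x : Fin n → ℝ | F *ᵥ x ≤ y k} ⊆ X ∧
        ∀ x : Fin n → ℝ, F *ᵥ x ≤ y k →
          ∃ u ∈ U, ∀ AB ∈ convexHull ℝ (Set.range fun i : Fin r => (A i, B i)),
            ∀ w ∈ W, F *ᵥ (AB.1 *ᵥ x + AB.2 *ᵥ u + w) ≤ y (k + 1))
    ↔
    -- there exist vertex-input tuples with (y_k, u_k, y_{k+1}) ∈ 𝕊 for all k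
    (∃ u : ℕ → Fin v → Fin m → ℝ, ∀ k : ℕ,
        E *ᵥ (y k) ≤ 0 ∧
        (∀ j : Fin v, (V j) *ᵥ (y k) ∈ X) ∧
        (∀ j : Fin v, u k j ∈ U) ∧
        ∀ (i : Fin r) (j : Fin v),
          F *ᵥ (A i *ᵥ ((V j) *ᵥ (y k)) + B i *ᵥ (u k j)) + d ≤ y (k + 1)) := by
  have hbdd : ∀ k : Fin f, BddAbove ((fun w => (F *ᵥ w) k) '' W) := fun k =>
    (hWcpt.image (by
      have : Continuous fun w : Fin n → ℝ => F *ᵥ w := by fun_prop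
      exact (continuous_apply k).comp this)).bddAbove
  have key : ∀ a b t s : Fin f → ℝ, ∀ p q : ℝ, 0 ≤ p → 0 ≤ q → p + q = 1 →
      a + d ≤ t → b + d ≤ t → s = p • a + q • b → s + d ≤ t := by
    intro a b t s p q hp hq hpq h1 h2 hs l
    have e1 := mul_le_mul_of_nonneg_left (h1 l) hp
    have e2 := mul_le_mul_of_nonneg_left (h2 l) hq
    simp only [Pi.add_apply] at e1 e2
    have hq' : q = 1 - p := by linarith
    subst hs
    simp only [Pi.add_apply, Pi.smul_apply, smul_eq_mul]
    subst hq'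
    linarith
  constructor
  · intro h
    choose u hu using fun k (j : Fin v) => (h k).2 _ (hver (y k) (hy k) j)
    refine ⟨u, fun k => ⟨hy k, fun j => (h k).1 (hver (y k) (hy k) j),
      fun j => (hu k j).1, fun i j l => ?_⟩⟩
    have h1 := fun w hw => (hu k j).2 (A i, B i) (subset_convexHull ℝ _ ⟨i, rfl⟩) w hw l
    simp only [Pi.add_apply]
    have : d l ≤ y (k + 1) l - (F *ᵥ (A i *ᵥ ((V j) *ᵥ (y k)) + B i *ᵥ (u k j))) l := by
      rw [hd]
      apply csSup_le (hWne.image _)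
      rintro _ ⟨w, hw, rfl⟩
      have h2 := h1 w hw
      rw [mulVec_add, Pi.add_apply] at h2
      simp only at h2 ⊢
      linarith
    linarith
  · rintro ⟨u, hu⟩ k
    obtain ⟨-, hVX, hUk, hS⟩ := hu k
    refine ⟨?_, fun x hx => ?_⟩
    · rw [hconv _ (hy k)]
      apply convexHull_min _ hX
      rintro _ ⟨j, rfl⟩
      exact hVX j
    · have hx' : x ∈ convexHull ℝ (Set.range fun j : Fin v => (V j) *ᵥ (y k)) := by
        rw [← hconv _ (hy k)]; exact hx
      have hQ : convexHull ℝ (Set.range fun j : Fin v => (V j) *ᵥ (y k)) ⊆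
          {x | ∃ u ∈ U, ∀ i, F *ᵥ (A i *ᵥ x + B i *ᵥ u) + d ≤ y (k + 1)} := by
        apply convexHull_min
        · rintro _ ⟨j, rfl⟩
          exact ⟨u k j, hUk j, fun i => hS i j⟩
        · rintro x1 ⟨u1, hu1, h1⟩ x2 ⟨u2, hu2, h2⟩ p q hp hq hpq
          refine ⟨p • u1 + q • u2, hU hu1 hu2 hp hq hpq, fun i => ?_⟩
          refine key _ _ _ _ p q hp hq hpq (h1 i) (h2 i) ?_
          simp only [mulVec_add, mulVec_smul, smul_add]
          abel
      obtain ⟨u0, hu0, h0⟩ := hQ hx'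
      refine ⟨u0, hu0, fun AB hAB w hw l => ?_⟩
      have hR : convexHull ℝ (Set.range fun i : Fin r => (A i, B i)) ⊆
          {AB | F *ᵥ (AB.1 *ᵥ x + AB.2 *ᵥ u0) + d ≤ y (k + 1)} := by
        apply convexHull_min
        · rintro _ ⟨i, rfl⟩
          exact h0 i
        · rintro M1 h1 M2 h2 p q hp hq hpq
          refine key _ _ _ _ p q hp hq hpq h1 h2 ?_
          simp only [Prod.fst_add, Prod.snd_add, Prod.smul_fst, Prod.smul_snd, add_mulVec,
            smul_mulVec, mulVec_add, mulVec_smul, smul_add]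
          abel
      have h3 := hR hAB l
      have h4 : (F *ᵥ w) l ≤ d l := by
        rw [hd]
        exact le_csSup (hbdd l) ⟨w, hw, rfl⟩
      rw [mulVec_add, Pi.add_apply]
      simp only [Pi.add_apply] at h3
      linarith
end

section
/- Let y ∈ 𝓔 = {y : E y ≤ 0}, and assume that for every y' ∈ 𝓔 the polytope P(y') equals the convex hull of V_1 y', …, V_v y' and V_j y' ∈ P(y') for every j. Assume X ⊆ ℝ^n and U ⊆ ℝ^m are convex, W is nonempty and compact, and d_k = sup{(F w)_k : w ∈ W}. Then P(y) is a feasible robust control invariant set (i.e., P(y) ⊆ X and P(y) ∈ F_reach(P(y))) if and only if there exists u = (u_1,…,u_v) ∈ (ℝ^m)^v with (y, u, y) ∈ S. -/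
open Matrix

/-- Corollary 1: `P(y)` with `y ∈ 𝓔` is a feasible robust control invariant set
if and only if there exists a vertex input tuple `u` with `(y, u, y) ∈ 𝕊`. -/
theorem statement3
    {f n m r v e : ℕ}
    (F : Matrix (Fin f) (Fin n) ℝ)
    (E : Matrix (Fin e) (Fin f) ℝ)
    (V : Fin v → Matrix (Fin n) (Fin f) ℝ)
    (A : Fin r → Matrix (Fin n) (Fin n) ℝ)
    (B : Fin r → Matrix (Fin n) (Fin m) ℝ)
    (X : Set (Fin n → ℝ)) (hX : Convex ℝ X)
    (U : Set (Fin m → ℝ)) (hU : Convex ℝ U)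
    (W : Set (Fin n → ℝ)) (hWne : W.Nonempty) (hWcpt : IsCompact W)
    (d : Fin f → ℝ) (hd : ∀ k : Fin f, d k = sSup ((fun w => (F *ᵥ w) k) '' W))
    (hconv : ∀ y' : Fin f → ℝ, E *ᵥ y' ≤ 0 →
      {x : Fin n → ℝ | F *ᵥ x ≤ y'} =
        convexHull ℝ (Set.range fun j : Fin v => (V j) *ᵥ y'))
    (hver : ∀ (y' : Fin f → ℝ), E *ᵥ y' ≤ 0 → ∀ j : Fin v, F *ᵥ ((V j) *ᵥ y') ≤ y')
    (y : Fin f → ℝ) (hy : E *ᵥ y ≤ 0) :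
    -- P(y) is a feasible robust control invariant set
    ({x : Fin n → ℝ | F *ᵥ x ≤ y} ⊆ X ∧
      ∀ x : Fin n → ℝ, F *ᵥ x ≤ y →
        ∃ u ∈ U, ∀ AB ∈ convexHull ℝ (Set.range fun i : Fin r => (A i, B i)),
          ∀ w ∈ W, F *ᵥ (AB.1 *ᵥ x + AB.2 *ᵥ u + w) ≤ y)
    ↔
    -- there exists u with (y, u, y) ∈ 𝕊
    (∃ u : Fin v → Fin m → ℝ,
        E *ᵥ y ≤ 0 ∧
        (∀ j : Fin v, (V j) *ᵥ y ∈ X) ∧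
        (∀ j : Fin v, u j ∈ U) ∧
        ∀ (i : Fin r) (j : Fin v),
          F *ᵥ (A i *ᵥ ((V j) *ᵥ y) + B i *ᵥ (u j)) + d ≤ y) := by
  have hle : ∀ w ∈ W, F *ᵥ w ≤ d := by
    intro w hw k
    rw [hd k]
    refine le_csSup ?_ ⟨w, hw, rfl⟩
    refine (hWcpt.image ?_).bddAbove
    exact (continuous_apply k).comp (Continuous.matrix_mulVec continuous_const continuous_id)
  constructor
  · rintro ⟨h1, h2⟩
    choose u hu hu2 using fun j : Fin v => h2 (V j *ᵥ y) (hver y hy j)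
    refine ⟨u, hy, fun j => h1 (hver y hy j), hu, fun i j k => ?_⟩
    have hk : d k ≤ y k - (F *ᵥ (A i *ᵥ (V j *ᵥ y) + B i *ᵥ u j)) k := by
      rw [hd k]
      refine csSup_le (hWne.image _) ?_
      rintro _ ⟨w, hw, rfl⟩
      have h := hu2 j (A i, B i) (subset_convexHull ℝ _ ⟨i, rfl⟩) w hw k
      rw [mulVec_add F _ w, Pi.add_apply] at h
      simp only at h ⊢
      linarith
    rw [Pi.add_apply]
    linarith
  · rintro ⟨u, -, hVX, huU, hS⟩
    refine ⟨?_, fun x hx => ?_⟩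
    · rw [hconv y hy]
      refine convexHull_min ?_ hX
      rintro _ ⟨j, rfl⟩
      exact hVX j
    · have hmem : x ∈ convexHull ℝ (Set.range fun j : Fin v => (V j) *ᵥ y) := by
        rw [← hconv y hy]; exact hx
      have hsub : convexHull ℝ (Set.range fun j : Fin v => (V j) *ᵥ y) ⊆
          {x | ∃ u ∈ U, ∀ i, F *ᵥ (A i *ᵥ x + B i *ᵥ u) + d ≤ y} := by
        refine convexHull_min ?_ ?_
        · rintro _ ⟨j, rfl⟩
          exact ⟨u j, huU j, fun i => hS i j⟩
        · rintro x1 ⟨u1, hu1, h1⟩ x2 ⟨u2, hu2, h2⟩ a b ha hb hab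
          refine ⟨a • u1 + b • u2, hU hu1 hu2 ha hb hab, fun i k => ?_⟩
          have e1 := mul_le_mul_of_nonneg_left (h1 i k) ha
          have e2 := mul_le_mul_of_nonneg_left (h2 i k) hb
          simp only [mulVec_add, mulVec_smul, Pi.add_apply, Pi.smul_apply, smul_eq_mul] at e1 e2 ⊢
          have hb' : b = 1 - a := by linarith
          subst hb'
          linarith
      obtain ⟨u0, hu0, h0⟩ := hsub hmem
      refine ⟨u0, hu0, fun AB hAB w hw => ?_⟩
      have hsub2 : convexHull ℝ (Set.range fun i : Fin r => (A i, B i)) ⊆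
          {AB | F *ᵥ (AB.1 *ᵥ x + AB.2 *ᵥ u0) + d ≤ y} := by
        refine convexHull_min ?_ ?_
        · rintro _ ⟨i, rfl⟩
          exact h0 i
        · rintro ⟨A1, B1⟩ h1 ⟨A2, B2⟩ h2 a b ha hb hab k
          have e1 := mul_le_mul_of_nonneg_left (h1 k) ha
          have e2 := mul_le_mul_of_nonneg_left (h2 k) hb
          simp only [Prod.fst_add, Prod.snd_add, Prod.smul_fst, Prod.smul_snd, add_mulVec,
            smul_mulVec, mulVec_add, mulVec_smul, Pi.add_apply, Pi.smul_apply,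
            smul_eq_mul] at e1 e2 ⊢
          have hb' : b = 1 - a := by linarith
          subst hb'
          linarith
      have h3 := hsub2 hAB
      rw [mulVec_add F _ w]
      exact (add_le_add_right (hle w hw) _).trans h3
end

section
/- Assume X ⊆ ℝ^n and U ⊆ ℝ^m are convex, W ⊆ ℝ^n satisfies F w ≤ d for all w ∈ W, γ ∈ (0,1), and (y_m, u_m, y_m) ∈ S. Let x ∈ ℝ^n and suppose (y_0,…,y_N, u_0,…,u_N) is feasible for the tube MPC problem at x, i.e., F x ≤ y_0, (y_k, u_k, y_{k+1}) ∈ S for k = 0,…,N−1, and (y_N, u_N, γ y_N + (1−γ) y_m) ∈ S. Let u ∈ U satisfy F(A_i x + B_i u) + d ≤ y_1 for all i ∈ {1,…,r}, and let x⁺ := A x + B u + w for some (A,B) ∈ Δ and w ∈ W. Then the shifted candidate (y_1,…,y_N, ŷ, u_1,…,u_N, û), with ŷ := γ y_N + (1−γ) y_m and û := γ u_N + (1−γ) u_m, is feasible for the tube MPC problem at x⁺: F x⁺ ≤ y_1, (y_k, u_k, y_{k+1}) ∈ S for k = 1,…,N−1, (y_N, u_N, ŷ) ∈ S, and (ŷ,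 û, γ ŷ + (1−γ) y_m) ∈ S. -/
open Matrix

/-- recursive feasibility of the CCTMPC scheme — the shifted candidate solution is
feasible at the successor state `x⁺ = A x + B u + w`. -/
theorem statement6
    {f n m r v e : ℕ}
    (F : Matrix (Fin f) (Fin n) ℝ)
    (E : Matrix (Fin e) (Fin f) ℝ)
    (V : Fin v → Matrix (Fin n) (Fin f) ℝ)
    (A : Fin r → Matrix (Fin n) (Fin n) ℝ)
    (B : Fin r → Matrix (Fin n) (Fin m) ℝ)
    (d : Fin f → ℝ)
    (X : Set (Fin n → ℝ)) (hX : Convex ℝ X)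
    (U : Set (Fin m → ℝ)) (hU : Convex ℝ U)
    (W : Set (Fin n → ℝ)) (hW : ∀ w ∈ W, F *ᵥ w ≤ d)
    (S : Set ((Fin f → ℝ) × (Fin v → Fin m → ℝ) × (Fin f → ℝ)))
    (hSdef : S = {p : (Fin f → ℝ) × (Fin v → Fin m → ℝ) × (Fin f → ℝ) |
      E *ᵥ p.1 ≤ 0 ∧
      (∀ j : Fin v, (V j) *ᵥ p.1 ∈ X) ∧
      (∀ j : Fin v, p.2.1 j ∈ U) ∧
      ∀ (i : Fin r) (j : Fin v),
        F *ᵥ (A i *ᵥ ((V j) *ᵥ p.1) + B i *ᵥ (p.2.1 j)) + d ≤ p.2.2})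
    (γ : ℝ) (hγ0 : 0 < γ) (hγ1 : γ < 1)
    (ym : Fin f → ℝ) (um : Fin v → Fin m → ℝ)
    (hm : (ym, um, ym) ∈ S)
    (N : ℕ) (hN : 1 ≤ N)
    (x : Fin n → ℝ)
    (y : ℕ → Fin f → ℝ) (u : ℕ → Fin v → Fin m → ℝ)
    -- feasibility of (y_0,…,y_N, u_0,…,u_N) at x
    (hx0 : F *ᵥ x ≤ y 0)
    (hstep : ∀ k < N, (y k, u k, y (k + 1)) ∈ S)
    (hterm : (y N, u N, γ • y N + (1 - γ) • ym) ∈ S)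
    -- the applied input and the successor state
    (uin : Fin m → ℝ) (huin : uin ∈ U)
    (hux : ∀ i : Fin r, F *ᵥ (A i *ᵥ x + B i *ᵥ uin) + d ≤ y 1)
    (AB : Matrix (Fin n) (Fin n) ℝ × Matrix (Fin n) (Fin m) ℝ)
    (hAB : AB ∈ convexHull ℝ (Set.range fun i : Fin r => (A i, B i)))
    (w : Fin n → ℝ) (hw : w ∈ W)
    (xplus : Fin n → ℝ) (hxplus : xplus = AB.1 *ᵥ x + AB.2 *ᵥ uin + w) :
    -- the shifted candidate is feasible at x⁺
    F *ᵥ xplus ≤ y 1 ∧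
    (∀ k, 1 ≤ k → k < N → (y k, u k, y (k + 1)) ∈ S) ∧
    (y N, u N, γ • y N + (1 - γ) • ym) ∈ S ∧
    (γ • y N + (1 - γ) • ym,
     γ • u N + (1 - γ) • um,
     γ • (γ • y N + (1 - γ) • ym) + (1 - γ) • ym) ∈ S := by
  have h1γ : 0 ≤ 1 - γ := by linarith
  have hsum : γ + (1 - γ) = 1 := by ring
  refine ⟨?_, fun k _ hk => hstep k hk, hterm, ?_⟩
  · have key : AB ∈ {P : Matrix (Fin n) (Fin n) ℝ × Matrix (Fin n) (Fin m) ℝ |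
        F *ᵥ (P.1 *ᵥ x + P.2 *ᵥ uin) + d ≤ y 1} := by
      refine convexHull_min ?_ ?_ hAB
      · rintro _ ⟨i, rfl⟩
        exact hux i
      · intro P hP Q hQ a b ha hb hab
        simp only [Set.mem_setOf_eq] at hP hQ ⊢
        have e1 : F *ᵥ ((a • P + b • Q).1 *ᵥ x + (a • P + b • Q).2 *ᵥ uin) + d
            = a • (F *ᵥ (P.1 *ᵥ x + P.2 *ᵥ uin) + d)
              + b • (F *ᵥ (Q.1 *ᵥ x + Q.2 *ᵥ uin) + d) := by
          have hd : d = a • d + b • d := by rw [← add_smul, hab, one_smul]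
          conv_lhs => rw [hd]
          simp only [Prod.fst_add, Prod.snd_add, Prod.smul_fst, Prod.smul_snd,
            Matrix.add_mulVec, Matrix.smul_mulVec, Matrix.mulVec_add,
            Matrix.mulVec_smul, smul_add]
          abel
        rw [e1]
        exact (convex_Iic (𝕜 := ℝ) (y 1)) hP hQ ha hb hab
    have hwd := hW w hw
    simp only [Set.mem_setOf_eq] at key
    rw [hxplus, Matrix.mulVec_add]
    exact (add_le_add le_rfl hwd).trans key
  · subst hSdef
    obtain ⟨a1, a2, a3, a4⟩ := hterm
    obtain ⟨b1, b2, b3, b4⟩ := hm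
    dsimp only at a1 a2 a3 a4 b1 b2 b3 b4
    refine ⟨?_, fun j => ?_, fun j => ?_, fun i j => ?_⟩
    · dsimp only
      rw [Matrix.mulVec_add, Matrix.mulVec_smul, Matrix.mulVec_smul]
      exact (convex_Iic (𝕜 := ℝ) (0 : Fin e → ℝ)) a1 b1 hγ0.le h1γ hsum
    · dsimp only
      rw [Matrix.mulVec_add, Matrix.mulVec_smul, Matrix.mulVec_smul]
      exact hX (a2 j) (b2 j) hγ0.le h1γ hsum
    · exact hU (a3 j) (b3 j) hγ0.le h1γ hsum
    · dsimp only
      have e1 : F *ᵥ (A i *ᵥ (V j *ᵥ (γ • y N + (1 - γ) • ym))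
            + B i *ᵥ ((γ • u N + (1 - γ) • um) j)) + d
          = γ • (F *ᵥ (A i *ᵥ (V j *ᵥ y N) + B i *ᵥ (u N j)) + d)
            + (1 - γ) • (F *ᵥ (A i *ᵥ (V j *ᵥ ym) + B i *ᵥ (um j)) + d) := by
        have hd : d = γ • d + (1 - γ) • d := by rw [← add_smul, hsum, one_smul]
        conv_lhs => rw [hd]
        simp only [Pi.add_apply, Pi.smul_apply, Matrix.mulVec_add,
          Matrix.mulVec_smul, smul_add]
        abel
      rw [e1]
      exact add_le_add (smul_le_smul_of_nonneg_left (a4 i j) hγ0.le)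
        (smul_le_smul_of_nonneg_left (b4 i j) h1γ)
end

section
/- Let Q and R be real symmetric positive semidefinite p×p matrices, let γ ∈ (0,1), and assume Q + γ² R ⪯ R in the Loewner order. Let N ≥ 1 and ξ_0, ξ_1, …, ξ_N ∈ ℝ^p. Define L(ξ_0,…,ξ_N) := Σ_{k=0}^{N−1} ξ_kᵀ Q ξ_k + ξ_Nᵀ R ξ_N, and define the shifted sequence ξ̂_k := ξ_{k+1} for k = 0,…,N−1 and ξ̂_N := γ ξ_N. Then L(ξ̂_0,…,ξ̂_N) ≤ L(ξ_0,…,ξ_N) − ξ_0ᵀ Q ξ_0. -/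
open Matrix Finset

/-- the key cost-decrease (Lyapunov) inequality. If `Q + γ² R ⪯ R` in the Loewner
order, then shifting the sequence and contracting the terminal element by `γ` decreases the
quadratic tube MPC cost by at least the first stage cost. -/
theorem statement7
    {p : ℕ}
    (Q R : Matrix (Fin p) (Fin p) ℝ)
    (hQ : Q.PosSemidef) (hR : R.PosSemidef)
    (γ : ℝ) (hγ0 : 0 < γ) (hγ1 : γ < 1)
    (hLoewner : (R - (Q + γ ^ 2 • R)).PosSemidef)
    (N : ℕ) (hN : 1 ≤ N)
    (ξ : ℕ → Fin p → ℝ) :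
    (∑ k ∈ Finset.range N, (ξ (k + 1)) ⬝ᵥ (Q *ᵥ ξ (k + 1)))
      + (γ • ξ N) ⬝ᵥ (R *ᵥ (γ • ξ N))
    ≤ (∑ k ∈ Finset.range N, (ξ k) ⬝ᵥ (Q *ᵥ ξ k))
      + (ξ N) ⬝ᵥ (R *ᵥ ξ N) - (ξ 0) ⬝ᵥ (Q *ᵥ ξ 0) := by
  have h := hLoewner.dotProduct_mulVec_nonneg (ξ N)
  have e1 := Finset.sum_range_succ (fun k => (ξ k) ⬝ᵥ (Q *ᵥ ξ k)) N
  have e2 := Finset.sum_range_succ' (fun k => (ξ k) ⬝ᵥ (Q *ᵥ ξ k)) N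
  simp only [star_trivial, Matrix.sub_mulVec, Matrix.add_mulVec, Matrix.smul_mulVec,
    dotProduct_sub, dotProduct_add, dotProduct_smul, smul_eq_mul] at h
  simp only [Matrix.mulVec_smul, dotProduct_smul, smul_dotProduct, smul_eq_mul]
  nlinarith [h, e1, e2]
end

section
/- Let F be a real f×n matrix and V_1,…,V_v real n×f matrices satisfying V_j F = I_n for every j. Let y_m ∈ ℝ^f and u_{m,1},…,u_{m,v} ∈ ℝ^m satisfy F(A_i (V_j y_m) + B_i u_{m,j}) + d ≤ y_m for all i ∈ {1,…,r} and j ∈ {1,…,v}. Let α ≥ 0, α⁺ ∈ ℝ, z, z⁺ ∈ ℝ^n, and v ∈ ℝ^m satisfy F(A_i z + B_i v) + (1−α) d + α y_m ≤ α⁺ y_m + F z⁺ for all i. Then F(A_i V_j(α y_m + F z) + B_i(α u_{m,j} + v)) + d ≤ α⁺ y_m + F z⁺ for all i ∈ {1,…,r} and j ∈ {1,…,v}. -/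
open Matrix

/-- the core algebraic step of Corollary 2 — homothetic parameters satisfying the
homothetic one-step inequality yield configuration-constrained admissible inequalities. -/
theorem statement10
    {f n m r v : ℕ}
    (F : Matrix (Fin f) (Fin n) ℝ)
    (V : Fin v → Matrix (Fin n) (Fin f) ℝ)
    (hVF : ∀ j : Fin v, V j * F = (1 : Matrix (Fin n) (Fin n) ℝ))
    (A : Fin r → Matrix (Fin n) (Fin n) ℝ)
    (B : Fin r → Matrix (Fin n) (Fin m) ℝ)
    (d : Fin f → ℝ)
    (ym : Fin f → ℝ) (um : Fin v → Fin m → ℝ)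
    (hm : ∀ (i : Fin r) (j : Fin v),
      F *ᵥ (A i *ᵥ ((V j) *ᵥ ym) + B i *ᵥ um j) + d ≤ ym)
    (α : ℝ) (hα : 0 ≤ α) (αplus : ℝ)
    (z zplus : Fin n → ℝ) (vv : Fin m → ℝ)
    (hstep : ∀ i : Fin r,
      F *ᵥ (A i *ᵥ z + B i *ᵥ vv) + (1 - α) • d + α • ym ≤ αplus • ym + F *ᵥ zplus) :
    ∀ (i : Fin r) (j : Fin v),
      F *ᵥ (A i *ᵥ ((V j) *ᵥ (α • ym + F *ᵥ z)) + B i *ᵥ (α • um j + vv)) + d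
        ≤ αplus • ym + F *ᵥ zplus := by
  intro i j k
  have h1 := mul_le_mul_of_nonneg_left (hm i j k) hα
  have h2 := hstep i k
  have hz : (V j) *ᵥ (F *ᵥ z) = z := by
    rw [Matrix.mulVec_mulVec, hVF j, Matrix.one_mulVec]
  simp only [Matrix.mulVec_add, Matrix.mulVec_smul, hz, Pi.add_apply, Pi.smul_apply,
    smul_eq_mul] at h1 h2 ⊢
  linarith
end

section
/- Assume: (a) E F = 0 and E y_m ≤ 0, so that E(α y_m + F z) ≤ 0 for all α ≥ 0 and z ∈ ℝ^n; (b) V_j F = I_n for every j; (c) for every y with E y ≤ 0, P(y) equals the convex hull of V_1 y,…,V_v y; (d) X = {x : H^x x ≤ h^x} and U = {u : H^u u ≤ h^u} are polytopic; (e) y_m ∈ ℝ^f and u_{m,1},…,u_{m,v} ∈ ℝ^m satisfy F(A_i (V_j y_m) + B_i u_{m,j}) + d ≤ y_m, V_j y_m ∈ X, and u_{m,j} ∈ U for all i, j; (f) W is nonempty with F w ≤ d for all w ∈ W. Let (z_k, α_k)_{k ∈ ℕ} and (v_k)_{k ∈ ℕ} satisfy ((z_k, α_k), v_k, (z_{k+1},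 α_{k+1})) ∈ S̄ for all k. Then the sequence of polytopes (P(α_k y_m + F z_k))_{k ∈ ℕ} is a feasible robust control tube: P(α_k y_m + F z_k) ⊆ X, and for every x ∈ P(α_k y_m + F z_k) there exists u ∈ U with A x + B u + w ∈ P(α_{k+1} y_m + F z_{k+1}) for all (A,B) ∈ Δ and w ∈ W. -/
open Matrix

/-- Corollary 2: a sequence of homothetic parameters in the homothetic admissible
set `S̄` generates a feasible robust control tube `(P(α_k y_m + F z_k))_{k ∈ ℕ}`. -/
theorem statement11
    {f n m r v e qx qu : ℕ}
    (F : Matrix (Fin f) (Fin n) ℝ)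
    (E : Matrix (Fin e) (Fin f) ℝ)
    (V : Fin v → Matrix (Fin n) (Fin f) ℝ)
    (A : Fin r → Matrix (Fin n) (Fin n) ℝ)
    (B : Fin r → Matrix (Fin n) (Fin m) ℝ)
    (W : Set (Fin n → ℝ)) (d : Fin f → ℝ)
    (Hx : Matrix (Fin qx) (Fin n) ℝ) (hx : Fin qx → ℝ)
    (Hu : Matrix (Fin qu) (Fin m) ℝ) (hu : Fin qu → ℝ)
    (ym : Fin f → ℝ) (um : Fin v → Fin m → ℝ)
    (hxm : Fin qx → ℝ)
    (hhxm : ∀ rr : Fin qx, IsGreatest (Set.range fun j : Fin v => (Hx *ᵥ ((V j) *ᵥ ym)) rr) (hxm rr))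
    (hum : Fin qu → ℝ)
    (hhum : ∀ rr : Fin qu, IsGreatest (Set.range fun j : Fin v => (Hu *ᵥ um j) rr) (hum rr))
    -- (a) configuration-cone compatibility
    (hEF : E * F = 0) (hEym : E *ᵥ ym ≤ 0)
    -- (b) translation-consistency of the vertex maps
    (hVF : ∀ j : Fin v, V j * F = (1 : Matrix (Fin n) (Fin n) ℝ))
    -- (c) vertex representation of configuration-constrained polytopes
    (hconv : ∀ y' : Fin f → ℝ, E *ᵥ y' ≤ 0 →
      {x : Fin n → ℝ | F *ᵥ x ≤ y'} =
        convexHull ℝ (Set.range fun j : Fin v => (V j) *ᵥ y'))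
    -- (e) (y_m, u_m) is robust control invariant and feasible
    (hinv : ∀ (i : Fin r) (j : Fin v),
      F *ᵥ (A i *ᵥ ((V j) *ᵥ ym) + B i *ᵥ um j) + d ≤ ym)
    (hymX : ∀ j : Fin v, Hx *ᵥ ((V j) *ᵥ ym) ≤ hx)
    (humU : ∀ j : Fin v, Hu *ᵥ um j ≤ hu)
    -- (f) disturbance set
    (hWne : W.Nonempty) (hWd : ∀ w ∈ W, F *ᵥ w ≤ d)
    -- the homothetic sequence lies in S̄
    (z : ℕ → Fin n → ℝ) (α : ℕ → ℝ) (vv : ℕ → Fin m → ℝ)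
    (hSbar : ∀ k : ℕ,
      0 ≤ α k ∧
      Hx *ᵥ z k + α k • hxm ≤ hx ∧
      Hu *ᵥ vv k + α k • hum ≤ hu ∧
      ∀ i : Fin r,
        F *ᵥ (A i *ᵥ z k + B i *ᵥ vv k) + (1 - α k) • d + α k • ym
          ≤ α (k + 1) • ym + F *ᵥ z (k + 1)) :
    -- conclusion: (P(α_k y_m + F z_k))_k is a feasible robust control tube
    ∀ k : ℕ,
      ({x : Fin n → ℝ | F *ᵥ x ≤ α k • ym + F *ᵥ z k} ⊆ {x : Fin n → ℝ | Hx *ᵥ x ≤ hx}) ∧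
      ∀ x : Fin n → ℝ, F *ᵥ x ≤ α k • ym + F *ᵥ z k →
        ∃ u : Fin m → ℝ, Hu *ᵥ u ≤ hu ∧
          ∀ AB ∈ convexHull ℝ (Set.range fun i : Fin r => (A i, B i)),
            ∀ w ∈ W,
              F *ᵥ (AB.1 *ᵥ x + AB.2 *ᵥ u + w) ≤ α (k + 1) • ym + F *ᵥ z (k + 1) := by
  intro k
  obtain ⟨hα, h1, h2, h3⟩ := hSbar k
  have comb : ∀ {q : ℕ} (a b : ℝ) (p1 p2 c : Fin q → ℝ), 0 ≤ a → 0 ≤ b → a + b = 1 →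
      p1 ≤ c → p2 ≤ c → a • p1 + b • p2 ≤ c := by
    intro q a b p1 p2 c ha hb hab hp1 hp2
    exact (convex_Iic c) hp1 hp2 ha hb hab
  have key : {x : Fin n → ℝ | F *ᵥ x ≤ α k • ym + F *ᵥ z k} ⊆
      {x | Hx *ᵥ x ≤ hx ∧ ∃ u : Fin m → ℝ, Hu *ᵥ u ≤ hu ∧
        ∀ i, F *ᵥ (A i *ᵥ x + B i *ᵥ u) + d ≤ α (k + 1) • ym + F *ᵥ z (k + 1)} := by
    rw [hconv]
    · apply convexHull_min
      · rintro _ ⟨j, rfl⟩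
        have hV : V j *ᵥ (α k • ym + F *ᵥ z k) = α k • (V j *ᵥ ym) + z k := by
          rw [mulVec_add, mulVec_smul, mulVec_mulVec, hVF, one_mulVec]
        simp only [Set.mem_setOf_eq, hV]
        refine ⟨?_, vv k + α k • um j, ?_, ?_⟩
        · intro q
          have a1 := h1 q
          have a2 := mul_le_mul_of_nonneg_left ((hhxm q).2 ⟨j, rfl⟩) hα
          simp only [mulVec_add, mulVec_smul, Pi.add_apply, Pi.smul_apply, smul_eq_mul] at a1 a2 ⊢
          linarith
        · intro q
          have a1 := h2 q
          have a2 := mul_le_mul_of_nonneg_left ((hhum q).2 ⟨j, rfl⟩) hα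
          simp only [mulVec_add, mulVec_smul, Pi.add_apply, Pi.smul_apply, smul_eq_mul] at a1 a2 ⊢
          linarith
        · intro i q
          have a1 := h3 i q
          have a2 := mul_le_mul_of_nonneg_left (hinv i j q) hα
          simp only [mulVec_add, mulVec_smul, Pi.add_apply, Pi.smul_apply, smul_eq_mul] at a1 a2 ⊢
          linarith
      · rintro x ⟨hx1, u, hu1, hi1⟩ x' ⟨hx2, u', hu2, hi2⟩ a b ha hb hab
        refine ⟨?_, a • u + b • u', ?_, ?_⟩
        · rw [mulVec_add, mulVec_smul, mulVec_smul]
          exact comb a b _ _ _ ha hb hab hx1 hx2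
        · rw [mulVec_add, mulVec_smul, mulVec_smul]
          exact comb a b _ _ _ ha hb hab hu1 hu2
        · intro i
          refine le_trans (le_of_eq ?_) (comb a b _ _ _ ha hb hab (hi1 i) (hi2 i))
          have hd : d = a • d + b • d := by rw [← add_smul, hab, one_smul]
          conv_lhs => rw [hd]
          simp only [mulVec_add, mulVec_smul, smul_add]
          abel
    · rw [mulVec_add, mulVec_smul, mulVec_mulVec, hEF, zero_mulVec, add_zero]
      intro q
      exact mul_nonpos_of_nonneg_of_nonpos hα (hEym q)
  refine ⟨fun x hxx => (key hxx).1, fun x hxx => ?_⟩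
  obtain ⟨-, u, hu1, hi⟩ := key hxx
  refine ⟨u, hu1, fun AB hAB w hw => ?_⟩
  have hsub : convexHull ℝ (Set.range fun i : Fin r => (A i, B i)) ⊆
      {AB | F *ᵥ (AB.1 *ᵥ x + AB.2 *ᵥ u) + d ≤ α (k + 1) • ym + F *ᵥ z (k + 1)} := by
    apply convexHull_min
    · rintro _ ⟨i, rfl⟩
      exact hi i
    · intro p hp p' hp' a b ha hb hab
      refine le_trans (le_of_eq ?_) (comb a b _ _ _ ha hb hab hp hp')
      have hd : d = a • d + b • d := by rw [← add_smul, hab, one_smul]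
      conv_lhs => rw [hd]
      simp only [Prod.fst_add, Prod.snd_add, Prod.smul_fst, Prod.smul_snd, add_mulVec,
        smul_mulVec, mulVec_add, mulVec_smul, smul_add]
      abel
  rw [mulVec_add]
  exact le_trans (add_le_add le_rfl (hWd w hw)) (hsub hAB)
end

section
/- Assume the polytopic constraint sets X = {x : H^x x ≤ h^x} and U = {u : H^u u ≤ h^u}, and that y_m, u_{m,1},…,u_{m,v} satisfy V_j y_m ∈ X and u_{m,j} ∈ U for all j. Then: (i) the tuple ((0,1), 0, (0,1)) belongs to the homothetic admissible set S̄; (ii) S̄ is a convex subset of (ℝ^n×ℝ) × ℝ^m × (ℝ^n×ℝ); and (iii) consequently, for any γ ∈ [0,1], if ((z,α), v, (γ z, γ α + 1 − γ)) ∈ S̄, then ((γ z, γ α + 1 − γ), γ v, (γ² z, γ(γ α + 1 − γ) + 1 − γ)) ∈ S̄. -/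
open Matrix

/-- the homothetic admissible set `S̄` contains `((0,1),0,(0,1))`, is convex, and
hence the terminal γ-contraction condition of Homothetic Tube MPC is recursively feasible. -/
theorem statement12
    {f n m r v qx qu : ℕ}
    (F : Matrix (Fin f) (Fin n) ℝ)
    (V : Fin v → Matrix (Fin n) (Fin f) ℝ)
    (A : Fin r → Matrix (Fin n) (Fin n) ℝ)
    (B : Fin r → Matrix (Fin n) (Fin m) ℝ)
    (d : Fin f → ℝ)
    (Hx : Matrix (Fin qx) (Fin n) ℝ) (hx : Fin qx → ℝ)
    (Hu : Matrix (Fin qu) (Fin m) ℝ) (hu : Fin qu → ℝ)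
    (ym : Fin f → ℝ) (um : Fin v → Fin m → ℝ)
    (hxm : Fin qx → ℝ)
    (hhxm : ∀ rr : Fin qx, IsGreatest (Set.range fun j : Fin v => (Hx *ᵥ ((V j) *ᵥ ym)) rr) (hxm rr))
    (hum : Fin qu → ℝ)
    (hhum : ∀ rr : Fin qu, IsGreatest (Set.range fun j : Fin v => (Hu *ᵥ um j) rr) (hum rr))
    -- feasibility of the RCI parameters: V_j y_m ∈ X and u_{m,j} ∈ U
    (hymX : ∀ j : Fin v, Hx *ᵥ ((V j) *ᵥ ym) ≤ hx)
    (humU : ∀ j : Fin v, Hu *ᵥ um j ≤ hu)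
    (Sbar : Set (((Fin n → ℝ) × ℝ) × (Fin m → ℝ) × ((Fin n → ℝ) × ℝ)))
    (hSbarDef : Sbar = {p : ((Fin n → ℝ) × ℝ) × (Fin m → ℝ) × ((Fin n → ℝ) × ℝ) |
      0 ≤ p.1.2 ∧
      Hx *ᵥ p.1.1 + p.1.2 • hxm ≤ hx ∧
      Hu *ᵥ p.2.1 + p.1.2 • hum ≤ hu ∧
      ∀ i : Fin r,
        F *ᵥ (A i *ᵥ p.1.1 + B i *ᵥ p.2.1) + (1 - p.1.2) • d + p.1.2 • ym
          ≤ p.2.2.2 • ym + F *ᵥ p.2.2.1}) :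
    -- (i) the RCI tuple belongs to S̄
    (((0 : Fin n → ℝ), (1 : ℝ)), (0 : Fin m → ℝ), ((0 : Fin n → ℝ), (1 : ℝ))) ∈ Sbar ∧
    -- (ii) S̄ is convex
    Convex ℝ Sbar ∧
    -- (iii) recursive feasibility of the terminal condition
    (∀ γ : ℝ, 0 ≤ γ → γ ≤ 1 →
      ∀ (z : Fin n → ℝ) (α : ℝ) (vv : Fin m → ℝ),
        ((z, α), vv, (γ • z, γ * α + 1 - γ)) ∈ Sbar →
        ((γ • z, γ * α + 1 - γ), γ • vv,
          ((γ ^ 2) • z, γ * (γ * α + 1 - γ) + 1 - γ)) ∈ Sbar) := by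
  have h1 : (((0 : Fin n → ℝ), (1 : ℝ)), (0 : Fin m → ℝ), ((0 : Fin n → ℝ), (1 : ℝ))) ∈ Sbar := by
    rw [hSbarDef]
    refine ⟨zero_le_one, ?_, ?_, ?_⟩
    · intro k
      obtain ⟨j, hj⟩ := (hhxm k).1
      have := hymX j k
      simp only [] at hj
      simp only [mulVec_zero, one_smul, zero_add]
      linarith
    · intro k
      obtain ⟨j, hj⟩ := (hhum k).1
      have := humU j k
      simp only [] at hj
      simp only [mulVec_zero, one_smul, zero_add]
      linarith
    · intro i
      simp
  have h2 : Convex ℝ Sbar := by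
    rw [hSbarDef]
    rintro ⟨⟨z, α⟩, w, ⟨z', α'⟩⟩ ⟨p1, p2, p3, p4⟩ ⟨⟨y, β⟩, u, ⟨y', β'⟩⟩ ⟨q1, q2, q3, q4⟩ a b ha hb hab
    obtain rfl : b = 1 - a := by linarith
    dsimp only at p1 p2 p3 p4 q1 q2 q3 q4
    refine ⟨?_, ?_, ?_, ?_⟩
    · simp only [Prod.smul_mk, Prod.mk_add_mk, smul_eq_mul]
      positivity
    · intro k
      have e1 := mul_le_mul_of_nonneg_left (p2 k) ha
      have e2 := mul_le_mul_of_nonneg_left (q2 k) hb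
      simp only [Prod.smul_mk, Prod.mk_add_mk, smul_eq_mul, mulVec_add, mulVec_smul,
        Pi.add_apply, Pi.smul_apply] at e1 e2 ⊢
      linarith
    · intro k
      have e1 := mul_le_mul_of_nonneg_left (p3 k) ha
      have e2 := mul_le_mul_of_nonneg_left (q3 k) hb
      simp only [Prod.smul_mk, Prod.mk_add_mk, smul_eq_mul, mulVec_add, mulVec_smul,
        Pi.add_apply, Pi.smul_apply] at e1 e2 ⊢
      linarith
    · intro i k
      have e1 := mul_le_mul_of_nonneg_left (p4 i k) ha
      have e2 := mul_le_mul_of_nonneg_left (q4 i k) hb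
      simp only [Prod.smul_mk, Prod.mk_add_mk, smul_eq_mul, mulVec_add, mulVec_smul,
        Pi.add_apply, Pi.smul_apply] at e1 e2 ⊢
      linarith
  refine ⟨h1, h2, ?_⟩
  intro γ h0 hle z α w hz
  have h3 := h2 hz h1 h0 (sub_nonneg.2 hle) (by ring)
  convert h3 using 1
  simp only [Prod.smul_mk, Prod.mk_add_mk, smul_eq_mul, smul_zero, add_zero, smul_smul, mul_one,
    pow_two, add_sub_assoc]
end

section
/- Let T be an invertible real n×n matrix, let W = convexHull{w_1,…,w_s} ⊆ ℝ^n, let Δ = convexHull{(A_1,B_1),…,(A_r,B_r)}, and let X ⊆ ℝ^n and U ⊆ ℝ^m be convex sets. Let z_1,…,z_v ∈ ℝ^n be such that {x : F x ≤ 1} = convexHull{z_1,…,z_v}, where 1 denotes the all-ones vector in ℝ^f. Suppose there exist u_1,…,u_v ∈ ℝ^m such that for all i ∈ {1,…,r}, j ∈ {1,…,v}, k ∈ {1,…,s}: F T⁻¹(A_i T z_j + B_i u_j + w_k) ≤ 1, T z_j ∈ X, and u_j ∈ U. Then the polytope P_T := {x : F T⁻¹ x ≤ 1} satisfies P_T =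 convexHull{T z_1,…,T z_v} ⊆ X, and P_T is robust control invariant: for every x ∈ P_T there exists u ∈ U such that A x + B u + w ∈ P_T for every (A,B) ∈ Δ and every w ∈ W. -/
open Matrix

/-- correctness of the NLP-based template initialization — if the transformed
vertex inequalities hold, then `P_T = {x : F T⁻¹ x ≤ 1}` equals `convexHull {T z_1, …, T z_v}`,
is contained in `X`, and is robust control invariant. -/
theorem statement15
    {f n m r v s : ℕ}
    (F : Matrix (Fin f) (Fin n) ℝ)
    (T : Matrix (Fin n) (Fin n) ℝ) (hT : IsUnit T.det)
    (A : Fin r → Matrix (Fin n) (Fin n) ℝ)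
    (B : Fin r → Matrix (Fin n) (Fin m) ℝ)
    (w : Fin s → Fin n → ℝ)
    (X : Set (Fin n → ℝ)) (hX : Convex ℝ X)
    (U : Set (Fin m → ℝ)) (hU : Convex ℝ U)
    (z : Fin v → Fin n → ℝ)
    (hP : {x : Fin n → ℝ | F *ᵥ x ≤ 1} = convexHull ℝ (Set.range z))
    (u : Fin v → Fin m → ℝ)
    (hstep : ∀ (i : Fin r) (j : Fin v) (k : Fin s),
      (F * T⁻¹) *ᵥ (A i *ᵥ (T *ᵥ z j) + B i *ᵥ u j + w k) ≤ 1)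
    (hzX : ∀ j : Fin v, T *ᵥ z j ∈ X)
    (huU : ∀ j : Fin v, u j ∈ U) :
    {x : Fin n → ℝ | (F * T⁻¹) *ᵥ x ≤ 1}
        = convexHull ℝ (Set.range fun j : Fin v => T *ᵥ z j) ∧
    {x : Fin n → ℝ | (F * T⁻¹) *ᵥ x ≤ 1} ⊆ X ∧
    ∀ x ∈ {x : Fin n → ℝ | (F * T⁻¹) *ᵥ x ≤ 1},
      ∃ u' ∈ U, ∀ AB ∈ convexHull ℝ (Set.range fun i : Fin r => (A i, B i)),
        ∀ ww ∈ convexHull ℝ (Set.range w),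
          (F * T⁻¹) *ᵥ (AB.1 *ᵥ x + AB.2 *ᵥ u' + ww) ≤ 1 := by
  have hset : {x : Fin n → ℝ | (F * T⁻¹) *ᵥ x ≤ 1}
        = convexHull ℝ (Set.range fun j : Fin v => T *ᵥ z j) := by
    have h1 : (Set.range fun j : Fin v => T *ᵥ z j) = T.mulVecLin '' Set.range z := by
      rw [← Set.range_comp]; rfl
    rw [h1, ← LinearMap.image_convexHull, ← hP]
    ext x
    simp only [Set.mem_ofPred_eq, Set.mem_image, Matrix.mulVecLin_apply]
    constructor
    · intro hx
      refine ⟨T⁻¹ *ᵥ x, ?_, ?_⟩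
      · rwa [Matrix.mulVec_mulVec]
      · rw [Matrix.mulVec_mulVec, Matrix.mul_nonsing_inv _ hT, Matrix.one_mulVec]
    · rintro ⟨y, hy, rfl⟩
      rwa [Matrix.mulVec_mulVec, Matrix.mul_assoc, Matrix.nonsing_inv_mul _ hT, Matrix.mul_one]
  have hconv : Convex ℝ {x : Fin n → ℝ | (F * T⁻¹) *ᵥ x ≤ 1} := by
    rw [hset]; exact convex_convexHull _ _
  have hc : ∀ p q : Fin n → ℝ, (F * T⁻¹) *ᵥ p ≤ 1 → (F * T⁻¹) *ᵥ q ≤ 1 → ∀ a b : ℝ, 0 ≤ a →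
      0 ≤ b → a + b = 1 → (F * T⁻¹) *ᵥ (a • p + b • q) ≤ 1 :=
    fun p q hp hq a b ha hb hab => hconv hp hq ha hb hab
  refine ⟨hset, ?_, ?_⟩
  · rw [hset]
    refine convexHull_min ?_ hX
    rintro _ ⟨j, rfl⟩
    exact hzX j
  intro x hx
  have hlift : ∃ u', (x, u') ∈ convexHull ℝ (Set.range fun j : Fin v => (T *ᵥ z j, u j)) := by
    rw [hset] at hx
    have h1 : (Set.range fun j : Fin v => T *ᵥ z j) =
        (LinearMap.fst ℝ (Fin n → ℝ) (Fin m → ℝ)) '' Set.range fun j => (T *ᵥ z j, u j) := by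
      rw [← Set.range_comp]; rfl
    rw [h1, ← LinearMap.image_convexHull] at hx
    obtain ⟨⟨a, b⟩, hp, rfl⟩ := hx
    exact ⟨b, hp⟩
  obtain ⟨u', hu'⟩ := hlift
  refine ⟨u', ?_, ?_⟩
  · have h := convexHull_min (t := (LinearMap.snd ℝ (Fin n → ℝ) (Fin m → ℝ)) ⁻¹' U) ?_
      (hU.linear_preimage _) hu'
    · exact h
    · rintro _ ⟨j, rfl⟩
      exact huU j
  have key1 : ∀ i k, (F * T⁻¹) *ᵥ (A i *ᵥ x + B i *ᵥ u' + w k) ≤ 1 := by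
    intro i k
    suffices hsub : convexHull ℝ (Set.range fun j : Fin v => (T *ᵥ z j, u j)) ⊆ {p : (Fin n → ℝ) × (Fin m → ℝ) |
      (F * T⁻¹) *ᵥ (A i *ᵥ p.1 + B i *ᵥ p.2 + w k) ≤ 1} by
      have h := hsub hu'
      rw [Set.mem_ofPred_eq] at h
      exact h
    refine convexHull_min ?_ ?_
    · rintro _ ⟨j, rfl⟩
      exact hstep i j k
    · intro p hp q hq a b ha hb hab
      rw [Set.mem_ofPred_eq] at hp hq ⊢
      have h := hc _ _ hp hq a b ha hb hab
      refine (congrArg (fun y => (F * T⁻¹) *ᵥ y) ?_).trans_le h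
      have hw : w k = a • w k + b • w k := by rw [← add_smul, hab, one_smul]
      simp only [Prod.fst_add, Prod.snd_add, Prod.smul_fst, Prod.smul_snd, Matrix.mulVec_add,
        Matrix.mulVec_smul, smul_add]
      nth_rewrite 1 [hw]
      abel
  intro AB hAB ww hww
  have key2 : ∀ k, (F * T⁻¹) *ᵥ (AB.1 *ᵥ x + AB.2 *ᵥ u' + w k) ≤ 1 := by
    intro k
    suffices hsub : convexHull ℝ (Set.range fun i : Fin r => (A i, B i)) ⊆ {p : Matrix (Fin n) (Fin n) ℝ × Matrix (Fin n) (Fin m) ℝ |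
      (F * T⁻¹) *ᵥ (p.1 *ᵥ x + p.2 *ᵥ u' + w k) ≤ 1} by
      have h := hsub hAB
      rw [Set.mem_ofPred_eq] at h
      exact h
    refine convexHull_min ?_ ?_
    · rintro _ ⟨i, rfl⟩
      exact key1 i k
    · intro p hp q hq a b ha hb hab
      rw [Set.mem_ofPred_eq] at hp hq ⊢
      have h := hc _ _ hp hq a b ha hb hab
      refine (congrArg (fun y => (F * T⁻¹) *ᵥ y) ?_).trans_le h
      have hw : w k = a • w k + b • w k := by rw [← add_smul, hab, one_smul]
      simp only [Prod.fst_add, Prod.snd_add, Prod.smul_fst, Prod.smul_snd, Matrix.add_mulVec,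
        Matrix.smul_mulVec, smul_add]
      nth_rewrite 1 [hw]
      abel
  suffices hsub : convexHull ℝ (Set.range w) ⊆ {y : Fin n → ℝ |
    (F * T⁻¹) *ᵥ (AB.1 *ᵥ x + AB.2 *ᵥ u' + y) ≤ 1} by
    have h := hsub hww
    rw [Set.mem_ofPred_eq] at h
    exact h
  refine convexHull_min ?_ ?_
  · rintro _ ⟨k, rfl⟩
    exact key2 k
  · exact hconv.translate_preimage_right _
end

section
/- Let H be a real q×n matrix, h ∈ ℝ^q, G a real p×n matrix, and g ∈ ℝ^p, and suppose the polyhedron {x ∈ ℝ^n : H x ≤ h} is nonempty and bounded. Then {x : H x ≤ h} ⊆ {x : G x ≤ g} if and only if there exists a real p×q matrix Λ with all entries nonnegative such that Λ H = G and Λ h ≤ g componentwise. -/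
open Matrix

/-- Algebraic Farkas lemma (proof due to Bartl). -/
lemma farkas_aux {V : Type*} [AddCommGroup V] [Module ℝ V] (m : ℕ) :
    ∀ (a : Fin m → V →ₗ[ℝ] ℝ) (b : V →ₗ[ℝ] ℝ),
      (∀ x, (∀ i, a i x ≤ 0) → b x ≤ 0) →
      ∃ l : Fin m → ℝ, (∀ i, 0 ≤ l i) ∧ ∀ x, b x = ∑ i, l i * a i x := by
  induction m with
  | zero =>
    intro a b hb
    refine ⟨fun _ => 0, fun _ => le_rfl, fun x => ?_⟩
    have h1 := hb x (fun i => i.elim0)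
    have h2 := hb (-x) (fun i => i.elim0)
    rw [map_neg] at h2
    simp
    linarith
  | succ m ih =>
    intro a b hb
    by_cases hc : ∀ x, (∀ i : Fin m, a i.succ x ≤ 0) → b x ≤ 0
    · obtain ⟨l, hl, hs⟩ := ih (fun i => a i.succ) b hc
      refine ⟨Fin.cons 0 l, ?_, ?_⟩
      · intro i
        refine Fin.cases ?_ ?_ i
        · simp
        · intro j; simpa using hl j
      · intro x
        simp [Fin.sum_univ_succ, hs x]
    · push Not at hc
      obtain ⟨y, hy, hby⟩ := hc
      have hpos : 0 < a 0 y := by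
        by_contra hn
        push Not at hn
        have := hb y (fun i => Fin.cases hn hy i)
        linarith
      set c := a 0 y with hcdef
      have key := ih (fun i => a i.succ - (a i.succ y / c) • a 0) (b - (b y / c) • a 0) ?_
      · obtain ⟨l, hl, hs⟩ := key
        refine ⟨Fin.cons (b y / c - ∑ i, l i * (a i.succ y / c)) l, ?_, ?_⟩
        · intro i
          refine Fin.cases ?_ ?_ i
          · simp only [Fin.cons_zero]
            have h1 : ∑ i, l i * (a i.succ y / c) ≤ 0 :=
              Finset.sum_nonpos fun i _ =>
                mul_nonpos_of_nonneg_of_nonpos (hl i)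
                  (div_nonpos_of_nonpos_of_nonneg (hy i) hpos.le)
            have h2 : 0 < b y / c := div_pos hby hpos
            linarith
          · intro j; simpa using hl j
        · intro x
          have := hs x
          simp only [LinearMap.sub_apply, LinearMap.smul_apply, smul_eq_mul, mul_sub,
            Finset.sum_sub_distrib] at this
          simp only [Fin.sum_univ_succ, Fin.cons_zero, Fin.cons_succ, sub_mul, Finset.sum_mul]
          simp only [← mul_assoc] at this ⊢
          linarith
      · intro x hx
        have := hb (x - (a 0 x / c) • y) ?_
        · simp only [map_sub, map_smul, LinearMap.sub_apply, LinearMap.smul_apply,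
            smul_eq_mul] at this ⊢
          have e : b y / c * a 0 x = a 0 x / c * b y := by ring
          linarith
        · intro i
          refine Fin.cases ?_ ?_ i
          · simp only [map_sub, map_smul, smul_eq_mul, ← hcdef]
            rw [div_mul_cancel₀ _ hpos.ne']
            simp
          · intro j
            have hj := hx j
            simp only [map_sub, map_smul, LinearMap.sub_apply, LinearMap.smul_apply,
              smul_eq_mul] at hj ⊢
            have e : a j.succ y / c * a 0 x = a 0 x / c * a j.succ y := by ring
            linarith

/-- Affine Farkas lemma, for a single inequality. -/
lemma affine_farkas_aux {q n : ℕ} (H : Matrix (Fin q) (Fin n) ℝ) (h : Fin q → ℝ)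
    (c : Fin n → ℝ) (d : ℝ) (x₀ : Fin n → ℝ) (hx₀ : H *ᵥ x₀ ≤ h)
    (hc : ∀ x, H *ᵥ x ≤ h → c ⬝ᵥ x ≤ d) :
    ∃ l : Fin q → ℝ, (∀ j, 0 ≤ l j) ∧ l ᵥ* H = c ∧ l ⬝ᵥ h ≤ d := by
  let F : (Fin n → ℝ) → ℝ → ((Fin n → ℝ) × ℝ →ₗ[ℝ] ℝ) := fun v s =>
    (dotProductBilin ℝ ℝ v) ∘ₗ LinearMap.fst ℝ _ _ - s • LinearMap.snd ℝ _ _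
  have hF : ∀ v s x t, F v s (x, t) = v ⬝ᵥ x - s * t := by
    intro v s x t
    simp [F]
  obtain ⟨l, hl, hs⟩ := farkas_aux (q + 1)
    (Fin.cons (F 0 1) (fun j => F (H j) (h j))) (F c d) (by
      rintro ⟨x, t⟩ hx
      rw [Fin.forall_fin_succ] at hx
      obtain ⟨ht, hx⟩ := hx
      simp only [Fin.cons_zero, Fin.cons_succ, hF, zero_dotProduct] at ht hx ⊢
      have ht : 0 ≤ t := by linarith
      rcases ht.eq_or_lt with rfl | ht
      · by_contra hn
        push Not at hn
        simp only [mul_zero, sub_zero] at hn hx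
        have hd := hc x₀ hx₀
        set s := (d - c ⬝ᵥ x₀ + 1) / (c ⬝ᵥ x) with hsdef
        have hs0 : 0 ≤ s := div_nonneg (by linarith) hn.le
        have h1 := hc (x₀ + s • x) (by
          intro j
          have h2 := hx₀ j
          have h3 := mul_nonneg hs0 (neg_nonneg.2 (hx j))
          simp only [mulVec, dotProduct_add, dotProduct_smul, smul_eq_mul] at h2 ⊢
          linarith)
        rw [dotProduct_add, dotProduct_smul, smul_eq_mul, hsdef, div_mul_cancel₀ _ hn.ne'] at h1
        linarith
      · have h1 := hc (t⁻¹ • x) (by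
          intro j
          have h2 := hx j
          simp only [mulVec, dotProduct_smul, smul_eq_mul]
          rw [inv_mul_le_iff₀ ht]
          linarith)
        rw [dotProduct_smul, smul_eq_mul, inv_mul_le_iff₀ ht] at h1
        linarith)
  refine ⟨fun j => l j.succ, fun j => hl _, ?_, ?_⟩
  · apply dotProduct_eq
    intro x
    have := hs (x, 0)
    simp only [Fin.sum_univ_succ, Fin.cons_zero, Fin.cons_succ, hF, zero_dotProduct, mul_zero,
      sub_zero, zero_add] at this
    rw [this, ← dotProduct_mulVec]
    rfl
  · have := hs (0, 1)
    simp only [Fin.sum_univ_succ, Fin.cons_zero, Fin.cons_succ, hF, dotProduct_zero, mul_one,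
      zero_sub, mul_neg, Finset.sum_neg_distrib] at this
    have h0 := hl 0
    simp only [dotProduct]
    linarith

/-- polyhedral containment duality — for a nonempty bounded polyhedron
`{x : H x ≤ h}`, containment in `{x : G x ≤ g}` holds iff there is a nonnegative multiplier
matrix `Λ` with `Λ H = G` and `Λ h ≤ g`. -/
theorem statement16
    {q n p : ℕ}
    (H : Matrix (Fin q) (Fin n) ℝ) (h : Fin q → ℝ)
    (G : Matrix (Fin p) (Fin n) ℝ) (g : Fin p → ℝ)
    (hne : {x : Fin n → ℝ | H *ᵥ x ≤ h}.Nonempty)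
    (hbdd : Bornology.IsBounded {x : Fin n → ℝ | H *ᵥ x ≤ h}) :
    {x : Fin n → ℝ | H *ᵥ x ≤ h} ⊆ {x : Fin n → ℝ | G *ᵥ x ≤ g} ↔
      ∃ Λ : Matrix (Fin p) (Fin q) ℝ,
        (∀ (i : Fin p) (j : Fin q), 0 ≤ Λ i j) ∧ Λ * H = G ∧ Λ *ᵥ h ≤ g := by
  constructor
  · intro hsub
    obtain ⟨x₀, hx₀⟩ := hne
    choose L hL0 hL1 hL2 using fun i =>
      affine_farkas_aux H h (G i) (g i) x₀ hx₀ (fun x hx => hsub hx i)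
    refine ⟨Matrix.of L, hL0, ?_, hL2⟩
    ext i j
    exact congrFun (hL1 i) j
  · rintro ⟨L, hL0, rfl, hL2⟩ x hx i
    rw [← mulVec_mulVec]
    refine le_trans ?_ (hL2 i)
    simp only [mulVec, dotProduct]
    exact Finset.sum_le_sum fun j _ => mul_le_mul_of_nonneg_left (hx j) (hL0 i j)
end

section
/- Let F be a real f×n matrix, y ∈ ℝ^f, and suppose P(y) := {x : F x ≤ y} equals the convex hull of points x_1,…,x_v ∈ ℝ^n. Let u_1,…,u_v ∈ U satisfy F(A_i x_j + B_i u_j) + d ≤ y for all i ∈ {1,…,r} and j ∈ {1,…,v}, where W ⊆ ℝ^n is nonempty and compact and d ∈ ℝ^f satisfies d_k = sup{(F w)_k : w ∈ W}. Let c ∈ ℝ^n and ζ ∈ ℝ with cᵀx ≤ ζ for every x ∈ P(y), and set d_c := sup{cᵀw : w ∈ W}. Then: (i) {x : F x ≤ y and cᵀx ≤ ζ} = P(y); and (ii) cᵀ(A_i x_j + B_i u_j) + d_c ≤ ζ for all i ∈ {1,…,r} and j ∈ {1,…,v}. Hence the extended template obtained by appending the row cᵀ to F and the entry ζ to y describes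 the same polytope, and the same vertex points and vertex inputs certify the extended robust invariance inequalities. -/
open Matrix

/-- appending a redundant supporting halfspace `cᵀ x ≤ ζ` to the template of an
RCI polytope `P(y)` describes the same polytope, and the same vertex points and vertex inputs
certify the extended robust invariance inequalities with `d_c = sup {cᵀ w : w ∈ W}`. -/
theorem statement17
    {f n m r v : ℕ}
    (F : Matrix (Fin f) (Fin n) ℝ)
    (A : Fin r → Matrix (Fin n) (Fin n) ℝ)
    (B : Fin r → Matrix (Fin n) (Fin m) ℝ)
    (U : Set (Fin m → ℝ))
    (W : Set (Fin n → ℝ)) (hWne : W.Nonempty) (hWcpt : IsCompact W)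
    (d : Fin f → ℝ) (hd : ∀ k : Fin f, d k = sSup ((fun w => (F *ᵥ w) k) '' W))
    (y : Fin f → ℝ)
    (x : Fin v → Fin n → ℝ)
    (hP : {x' : Fin n → ℝ | F *ᵥ x' ≤ y} = convexHull ℝ (Set.range x))
    (u : Fin v → Fin m → ℝ) (huU : ∀ j, u j ∈ U)
    (hinv : ∀ (i : Fin r) (j : Fin v), F *ᵥ (A i *ᵥ x j + B i *ᵥ u j) + d ≤ y)
    (c : Fin n → ℝ) (ζ : ℝ)
    (hsupp : ∀ x' : Fin n → ℝ, F *ᵥ x' ≤ y → c ⬝ᵥ x' ≤ ζ)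
    (dc : ℝ) (hdc : dc = sSup ((fun w => c ⬝ᵥ w) '' W)) :
    -- (i) the appended halfspace is redundant
    {x' : Fin n → ℝ | F *ᵥ x' ≤ y ∧ c ⬝ᵥ x' ≤ ζ} = {x' : Fin n → ℝ | F *ᵥ x' ≤ y} ∧
    -- (ii) the extended invariance inequalities hold
    ∀ (i : Fin r) (j : Fin v), c ⬝ᵥ (A i *ᵥ x j + B i *ᵥ u j) + dc ≤ ζ := by
  refine ⟨?_, ?_⟩
  · ext x'
    exact ⟨fun h => h.1, fun h => ⟨h, hsupp x' h⟩⟩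
  · intro i j
    have key : dc ≤ ζ - c ⬝ᵥ (A i *ᵥ x j + B i *ᵥ u j) := by
      rw [hdc]
      apply csSup_le (hWne.image _)
      rintro _ ⟨w, hw, rfl⟩
      have h := hsupp ((A i *ᵥ x j + B i *ᵥ u j) + w) (by
        intro k
        have h1 := hinv i j k
        have hcont : Continuous (fun w : Fin n → ℝ => (F *ᵥ w) k) :=
          (continuous_apply k).comp (Continuous.matrix_mulVec continuous_const continuous_id)
        have h2 : (F *ᵥ w) k ≤ d k := by
          rw [hd k]
          exact le_csSup (hWcpt.image hcont).bddAbove ⟨w, hw, rfl⟩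
        rw [Matrix.mulVec_add F (A i *ᵥ x j + B i *ᵥ u j) w]
        simp only [Pi.add_apply] at h1 ⊢
        linarith)
      rw [dotProduct_add c (A i *ᵥ x j + B i *ᵥ u j) w] at h
      change c ⬝ᵥ w ≤ _
      linarith
    linarith
end
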